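/- arXiv:2410.20625 — 2 statements merged into one kernel-verified Lean document; each statement's English description precedes it below -/
import Mathlib

section
/- Regret decomposition for preconditioned online gradient descent: let d, T ≥ 1, η > 0, let θ₁, …, θ_{T+1}, θ* ∈ ℝ^d, g₁, …, g_T ∈ ℝ^d, and let X₁, …, X_T ∈ ℝ^{d×d} be symmetric positive definite matrices such that θ_{t+1} = θ_t − η X_t g_t for each t = 1, …, T. Then Σ_{t=1}^T g_tᵀ(θ_t − θ*) ≤ (1/(2η))·(θ₁ − θ*)ᵀ X₁^{−1} (θ₁ − θ*) + (η/2)·Σ_{t=1}^T g_tᵀ X_t g_t + (1/(2η))·Σ_{t=2}^T (θ_t − θ*)ᵀ (X_t^{−1} − X_{t-1}^{−1}) (θ_t − θ*). -/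
open Matrix

/-!
Write `‖v‖²_{t} = vᵀ X_t⁻¹ v`. Measured in the norm of its own preconditioner, one update satisfies
`2η gₜᵀ(θₜ - θ*) = ‖θₜ - θ*‖²_{t} - ‖θₜ₊₁ - θ*‖²_{t} + η² gₜᵀ X_t gₜ`, because `X_t⁻¹ (X_t gₜ) = gₜ`
and `X_t⁻¹` is symmetric. Summing over `t`, the squared distances telescope up to the
change of norm at each `θₜ`, and the only term left over is `-‖θ_{T+1} - θ*‖²_{T} ≤ 0`.
-/

theorem sum_Icc_sub_eq_sub_add_sum_Icc_sub_pred {G : Type*} [AddCommGroup G] (p q : ℕ → G)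
    {m n : ℕ} (hmn : m ≤ n) :
    ∑ t ∈ Finset.Icc m n, (p t - q t) =
      p m - q n + ∑ t ∈ Finset.Icc (m + 1) n, (p t - q (t - 1)) := by
  induction n, hmn using Nat.le_induction with
  | base => simp
  | succ n hmn ih =>
    rw [Finset.sum_Icc_succ_top (by lia), Finset.sum_Icc_succ_top (by lia), ih,
      Nat.add_sub_cancel]
    abel

theorem dotProduct_mulVec_comm_of_isSymm {ι R : Type*} [Fintype ι] [CommSemiring R]
    {A : Matrix ι ι R} (hA : A.IsSymm) (v w : ι → R) : v ⬝ᵥ A *ᵥ w = w ⬝ᵥ A *ᵥ v := by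
  rw [← dotProduct_transpose_mulVec, hA.eq]

section CommRing

variable {ι R : Type*} [Fintype ι] [CommRing R] {A : Matrix ι ι R}

theorem sub_dotProduct_mulVec_sub_of_isSymm (hA : A.IsSymm) (v w : ι → R) :
    (v - w) ⬝ᵥ A *ᵥ (v - w) = v ⬝ᵥ A *ᵥ v - 2 * (v ⬝ᵥ A *ᵥ w) + w ⬝ᵥ A *ᵥ w := by
  simp only [mulVec_sub, dotProduct_sub, sub_dotProduct]
  rw [dotProduct_mulVec_comm_of_isSymm hA w v]
  ring

variable [DecidableEq ι]

theorem inv_mulVec_mulVec_of_isUnit (hA : IsUnit A) (v : ι → R) : A⁻¹ *ᵥ A *ᵥ v = v := by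
  rw [mulVec_mulVec, nonsing_inv_mul A ((isUnit_iff_isUnit_det A).mp hA), one_mulVec]

theorem mulVec_inv_mulVec_of_isUnit (hA : IsUnit A) (v : ι → R) : A *ᵥ A⁻¹ *ᵥ v = v := by
  rw [mulVec_mulVec, mul_nonsing_inv A ((isUnit_iff_isUnit_det A).mp hA), one_mulVec]

theorem dotProduct_inv_mulVec_self_nonneg [LE R] (hA : IsUnit A)
    (hnonneg : ∀ v, 0 ≤ v ⬝ᵥ A *ᵥ v) (v : ι → R) : 0 ≤ v ⬝ᵥ A⁻¹ *ᵥ v := by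
  simpa only [mulVec_inv_mulVec_of_isUnit hA, dotProduct_comm _ v] using hnonneg (A⁻¹ *ᵥ v)

theorem sub_smul_mulVec_dotProduct_inv_mulVec_self (hsymm : A.IsSymm) (hunit : IsUnit A)
    (η : R) (v g : ι → R) :
    (v - η • A *ᵥ g) ⬝ᵥ A⁻¹ *ᵥ (v - η • A *ᵥ g) =
      v ⬝ᵥ A⁻¹ *ᵥ v - 2 * η * (g ⬝ᵥ v) + η ^ 2 * (g ⬝ᵥ A *ᵥ g) := by
  have hcancel : A⁻¹ *ᵥ (η • A *ᵥ g) = η • g := by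
    rw [mulVec_smul, inv_mulVec_mulVec_of_isUnit hunit]
  rw [sub_dotProduct_mulVec_sub_of_isSymm hsymm.inv, hcancel]
  simp only [dotProduct_smul, smul_eq_mul, dotProduct_comm _ g]
  ring

end CommRing

section Field

variable {ι K : Type*} [Fintype ι] [DecidableEq ι] [Field K]

theorem dotProduct_eq_of_preconditioned_step [NeZero (2 : K)] {A : Matrix ι ι K}
    (hsymm : A.IsSymm) (hunit : IsUnit A) {η : K} (hη : η ≠ 0) (v g : ι → K) :
    g ⬝ᵥ v =
      (1 / (2 * η)) * (v ⬝ᵥ A⁻¹ *ᵥ v - (v - η • A *ᵥ g) ⬝ᵥ A⁻¹ *ᵥ (v - η • A *ᵥ g)) +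
      (η / 2) * (g ⬝ᵥ A *ᵥ g) := by
  have htwo : (2 : K) ≠ 0 := NeZero.ne 2
  rw [sub_smul_mulVec_dotProduct_inv_mulVec_self hsymm hunit]
  field_simp
  ring

theorem preconditioned_ogd_regret_eq [NeZero (2 : K)] {T : ℕ} (hT : 1 ≤ T) {η : K} (hη : η ≠ 0)
    (θ : ℕ → ι → K) (θstar : ι → K) (g : ℕ → ι → K) (X : ℕ → Matrix ι ι K)
    (hsymm : ∀ t ∈ Finset.Icc 1 T, (X t).IsSymm) (hunit : ∀ t ∈ Finset.Icc 1 T, IsUnit (X t))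
    (hupd : ∀ t ∈ Finset.Icc 1 T, θ (t + 1) = θ t - η • X t *ᵥ g t) :
    ∑ t ∈ Finset.Icc 1 T, g t ⬝ᵥ (θ t - θstar) =
      (1 / (2 * η)) * ((θ 1 - θstar) ⬝ᵥ (X 1)⁻¹ *ᵥ (θ 1 - θstar)) +
      (η / 2) * ∑ t ∈ Finset.Icc 1 T, g t ⬝ᵥ X t *ᵥ g t +
      (1 / (2 * η)) * ∑ t ∈ Finset.Icc 2 T,
        (θ t - θstar) ⬝ᵥ ((X t)⁻¹ - (X (t - 1))⁻¹) *ᵥ (θ t - θstar) -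
      (1 / (2 * η)) * ((θ (T + 1) - θstar) ⬝ᵥ (X T)⁻¹ *ᵥ (θ (T + 1) - θstar)) := by
  let before (t : ℕ) : K := (θ t - θstar) ⬝ᵥ (X t)⁻¹ *ᵥ (θ t - θstar)
  let after (t : ℕ) : K := (θ (t + 1) - θstar) ⬝ᵥ (X t)⁻¹ *ᵥ (θ (t + 1) - θstar)
  have hstep : ∀ t ∈ Finset.Icc 1 T, g t ⬝ᵥ (θ t - θstar) =
      (1 / (2 * η)) * (before t - after t) + (η / 2) * (g t ⬝ᵥ X t *ᵥ g t) := by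
    intro t ht
    simp only [before, after, hupd t ht, sub_right_comm _ _ θstar]
    exact dotProduct_eq_of_preconditioned_step (hsymm t ht) (hunit t ht) hη _ _
  have hdrift : ∀ t ∈ Finset.Icc 2 T, before t - after (t - 1) =
      (θ t - θstar) ⬝ᵥ ((X t)⁻¹ - (X (t - 1))⁻¹) *ᵥ (θ t - θstar) := by
    intro t ht
    have hpred : t - 1 + 1 = t := Nat.sub_add_cancel (one_le_two.trans (Finset.mem_Icc.mp ht).1)
    simp only [before, after, hpred, sub_mulVec, dotProduct_sub]
  rw [Finset.sum_congr rfl hstep, Finset.sum_add_distrib, ← Finset.mul_sum, ← Finset.mul_sum,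
    sum_Icc_sub_eq_sub_add_sum_Icc_sub_pred before after hT, Finset.sum_congr rfl hdrift]
  ring

theorem preconditioned_ogd_regret_decomposition_general [LinearOrder K] [IsStrictOrderedRing K]
    {T : ℕ} (hT : 1 ≤ T) {η : K} (hη : 0 < η)
    (θ : ℕ → ι → K) (θstar : ι → K) (g : ℕ → ι → K) (X : ℕ → Matrix ι ι K)
    (hsymm : ∀ t ∈ Finset.Icc 1 T, (X t).IsSymm) (hunit : ∀ t ∈ Finset.Icc 1 T, IsUnit (X t))
    (hnonneg : ∀ v, 0 ≤ v ⬝ᵥ X T *ᵥ v)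
    (hupd : ∀ t ∈ Finset.Icc 1 T, θ (t + 1) = θ t - η • X t *ᵥ g t) :
    ∑ t ∈ Finset.Icc 1 T, g t ⬝ᵥ (θ t - θstar) ≤
      (1 / (2 * η)) * ((θ 1 - θstar) ⬝ᵥ (X 1)⁻¹ *ᵥ (θ 1 - θstar)) +
      (η / 2) * ∑ t ∈ Finset.Icc 1 T, g t ⬝ᵥ X t *ᵥ g t +
      (1 / (2 * η)) * ∑ t ∈ Finset.Icc 2 T,
        (θ t - θstar) ⬝ᵥ ((X t)⁻¹ - (X (t - 1))⁻¹) *ᵥ (θ t - θstar) := by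
  have hlast : 0 ≤ (θ (T + 1) - θstar) ⬝ᵥ (X T)⁻¹ *ᵥ (θ (T + 1) - θstar) :=
    dotProduct_inv_mulVec_self_nonneg (hunit T (Finset.right_mem_Icc.mpr hT)) hnonneg _
  rw [preconditioned_ogd_regret_eq hT hη.ne' θ θstar g X hsymm hunit hupd]
  exact sub_le_self _ (by positivity)

end Field

/-- Regret decomposition for preconditioned online gradient descent:
if `θ_{t+1} = θ_t - η X_t g_t` for `t = 1, …, T` with symmetric positive definite
preconditioners `X_t`, then
`Σ_t gₜᵀ(θₜ - θ*) ≤ (1/2η)(θ₁-θ*)ᵀX₁⁻¹(θ₁-θ*) + (η/2)Σ_t gₜᵀXₜgₜ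
  + (1/2η)Σ_{t=2}^T (θₜ-θ*)ᵀ(Xₜ⁻¹ - X_{t-1}⁻¹)(θₜ-θ*)`. -/
theorem preconditioned_ogd_regret_decomposition (d T : ℕ) (hd : 1 ≤ d) (hT : 1 ≤ T)
    (η : ℝ) (hη : 0 < η)
    (θ : ℕ → (Fin d → ℝ)) (θstar : Fin d → ℝ) (g : ℕ → (Fin d → ℝ))
    (X : ℕ → Matrix (Fin d) (Fin d) ℝ)
    (hX : ∀ t ∈ Finset.Icc 1 T, (X t).PosDef)
    (hupd : ∀ t ∈ Finset.Icc 1 T, θ (t + 1) = θ t - η • (X t).mulVec (g t)) :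
    ∑ t ∈ Finset.Icc 1 T, g t ⬝ᵥ (θ t - θstar) ≤
      (1 / (2 * η)) * ((θ 1 - θstar) ⬝ᵥ (X 1)⁻¹.mulVec (θ 1 - θstar)) +
      (η / 2) * ∑ t ∈ Finset.Icc 1 T, g t ⬝ᵥ (X t).mulVec (g t) +
      (1 / (2 * η)) * ∑ t ∈ Finset.Icc 2 T,
        (θ t - θstar) ⬝ᵥ ((X t)⁻¹ - (X (t - 1))⁻¹).mulVec (θ t - θstar) :=
  preconditioned_ogd_regret_decomposition_general hT hη θ θstar g X
    (fun t ht => isHermitian_iff_isSymm.mp (hX t ht).isHermitian) (fun t ht => (hX t ht).isUnit)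
    (hX T (Finset.right_mem_Icc.mpr hT)).posSemidef.dotProduct_mulVec_nonneg hupd
end

section
/- Bound on the escaped mass: let G₁, …, G_T ∈ ℝ^{m×r} and P₁, …, P_T ∈ ℝ^{r×r} with P_t P_tᵀ ⪯ I_r for each t. Define V̄₀ = 0 and V̄_t = P_t V̄_{t-1} P_tᵀ + G_tᵀ G_t for t = 1, …, T, and let ρ₀ = 0 and ρ₁, …, ρ_T be any real sequence satisfying ρ_t ≤ ρ_{t-1} + trace(V̄_{t-1}) − trace(P_t V̄_{t-1} P_tᵀ) for each t. Then every V̄_t is symmetric positive semidefinite and ρ_T ≤ Σ_{t=1}^T trace(G_tᵀ G_t) − trace(V̄_T); in particular, if ‖G_t‖_F ≤ G for all t, then ρ_T ≤ G²·T. -/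
/-!
The potential `ρ t + trace (V t)` grows by at most `trace ((G t)ᵀ * G t)` per step: whatever trace
the transport loses is exactly what the escaped mass may gain. Summing from the zero initial value
gives the trace bound, and `trace (V T) ≥ 0` together with `trace (Gᵀ * G) = ‖G‖_F ^ 2` gives the
bound that is linear in `T`.
-/

open Matrix

/-- The Frobenius norm of a real matrix. -/
noncomputable def frobNorm {m r : ℕ} (M : Matrix (Fin m) (Fin r) ℝ) : ℝ :=
  Real.sqrt (∑ i, ∑ j, (M i j) ^ 2)

theorem le_add_sum_Icc_of_le_add {M : Type*} [AddCommMonoid M] [Preorder M] [AddRightMono M]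
    {T : ℕ} {a b : ℕ → M} (h : ∀ t ∈ Finset.Icc 1 T, a t ≤ a (t - 1) + b t) :
    a T ≤ a 0 + ∑ t ∈ Finset.Icc 1 T, b t := by
  induction T with
  | zero => simp
  | succ k ih =>
    have hk : a k ≤ a 0 + ∑ t ∈ Finset.Icc 1 k, b t :=
      ih fun t ht => h t (Finset.Icc_subset_Icc_right k.le_succ ht)
    calc a (k + 1) ≤ a k + b (k + 1) := h (k + 1) (by simp)
      _ ≤ (a 0 + ∑ t ∈ Finset.Icc 1 k, b t) + b (k + 1) := by gcongr
      _ = a 0 + ∑ t ∈ Finset.Icc 1 (k + 1), b t := by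
        rw [Finset.sum_Icc_succ_top (by simp), add_assoc]

theorem posSemidef_of_eq_mul_mul_conjTranspose_add {n R : Type*} [Fintype n] [Ring R]
    [PartialOrder R] [StarRing R] [AddLeftMono R] {T : ℕ} {P Q V : ℕ → Matrix n n R}
    (hV₀ : (V 0).PosSemidef) (hQ : ∀ t ∈ Finset.Icc 1 T, (Q t).PosSemidef)
    (hV : ∀ t ∈ Finset.Icc 1 T, V t = P t * V (t - 1) * (P t)ᴴ + Q t) {t : ℕ} (ht : t ≤ T) :
    (V t).PosSemidef := by
  induction t with
  | zero => exact hV₀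
  | succ k ih =>
    have hk : k + 1 ∈ Finset.Icc 1 T := Finset.mem_Icc.mpr ⟨k.succ_pos, ht⟩
    rw [hV (k + 1) hk]
    exact ((ih (k.le_succ.trans ht)).mul_mul_conjTranspose_same _).add (hQ (k + 1) hk)

theorem le_add_sum_sub_of_le_add_sub {M : Type*} [AddCommGroup M] [Preorder M] [AddRightMono M]
    {T : ℕ} {ρ v w g : ℕ → M} (hv : ∀ t ∈ Finset.Icc 1 T, v t = w t + g t)
    (hρ : ∀ t ∈ Finset.Icc 1 T, ρ t ≤ ρ (t - 1) + v (t - 1) - w t) :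
    ρ T ≤ ρ 0 + v 0 + (∑ t ∈ Finset.Icc 1 T, g t) - v T := by
  have potential_step : ∀ t ∈ Finset.Icc 1 T, ρ t + v t ≤ ρ (t - 1) + v (t - 1) + g t := by
    intro t ht
    calc ρ t + v t ≤ ρ (t - 1) + v (t - 1) - w t + v t := by gcongr; exact hρ t ht
      _ = ρ (t - 1) + v (t - 1) + g t := by rw [hv t ht]; abel
  exact le_sub_iff_add_le.mpr (le_add_sum_Icc_of_le_add (a := fun t => ρ t + v t) potential_step)

section Frobenius

open scoped ComplexOrder Matrix.Norms.Frobenius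

variable {m n 𝕜 : Type*} [Fintype m] [Fintype n] [RCLike 𝕜]

theorem trace_conjTranspose_mul_self_eq_frobenius_norm_sq (A : Matrix m n 𝕜) :
    (Aᴴ * A).trace = (‖A‖ ^ 2 : ℝ) := by
  have norm_sq : ‖A‖ ^ 2 = ∑ i, ∑ j, ‖A i j‖ ^ 2 := by
    rw [frobenius_norm_def, ← Real.sqrt_eq_rpow, Real.sq_sqrt (by positivity)]
    simp only [Real.rpow_two]
  rw [norm_sq, Finset.sum_comm]
  simp [trace, mul_apply, RCLike.conj_mul]

theorem frobNorm_eq_frobenius_norm {k l : ℕ} (A : Matrix (Fin k) (Fin l) ℝ) :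
    frobNorm A = ‖A‖ := by
  simp [frobNorm, frobenius_norm_def, Real.sqrt_eq_rpow]

theorem escaped_mass_bound_general {T : ℕ} {G : ℕ → Matrix m n 𝕜} {P V : ℕ → Matrix n n 𝕜}
    (hV₀ : V 0 = 0)
    (hV : ∀ t ∈ Finset.Icc 1 T, V t = P t * V (t - 1) * (P t)ᴴ + (G t)ᴴ * G t)
    {ρ : ℕ → ℝ} (hρ₀ : ρ 0 = 0)
    (hρ : ∀ t ∈ Finset.Icc 1 T, ρ t ≤
      ρ (t - 1) + RCLike.re (V (t - 1)).trace - RCLike.re (P t * V (t - 1) * (P t)ᴴ).trace) :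
    (∀ t ≤ T, (V t).PosSemidef) ∧
    ρ T ≤ (∑ t ∈ Finset.Icc 1 T, RCLike.re ((G t)ᴴ * G t).trace) - RCLike.re (V T).trace ∧
    ∀ B : ℝ, (∀ t ∈ Finset.Icc 1 T, ‖G t‖ ≤ B) → ρ T ≤ B ^ 2 * T := by
  have posSemidef_V : ∀ t ≤ T, (V t).PosSemidef := fun t =>
    posSemidef_of_eq_mul_mul_conjTranspose_add (hV₀ ▸ .zero)
      (fun s _ => posSemidef_conjTranspose_mul_self (G s)) hV
  have trace_step : ∀ t ∈ Finset.Icc 1 T, RCLike.re (V t).trace =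
      RCLike.re (P t * V (t - 1) * (P t)ᴴ).trace + RCLike.re ((G t)ᴴ * G t).trace :=
    fun t ht => by rw [hV t ht, trace_add, map_add]
  have trace_bound : ρ T ≤
      (∑ t ∈ Finset.Icc 1 T, RCLike.re ((G t)ᴴ * G t).trace) - RCLike.re (V T).trace := by
    simpa [hρ₀, hV₀] using
      le_add_sum_sub_of_le_add_sub (v := fun t => RCLike.re (V t).trace) trace_step hρ
  refine ⟨posSemidef_V, trace_bound, fun B hB => ?_⟩
  calc ρ T ≤ ∑ t ∈ Finset.Icc 1 T, RCLike.re ((G t)ᴴ * G t).trace :=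
        trace_bound.trans <| sub_le_self _ <|
          (RCLike.nonneg_iff.mp (posSemidef_V T le_rfl).trace_nonneg).1
    _ = ∑ t ∈ Finset.Icc 1 T, ‖G t‖ ^ 2 := by
        simp only [trace_conjTranspose_mul_self_eq_frobenius_norm_sq, RCLike.ofReal_re]
    _ ≤ ∑ _t ∈ Finset.Icc 1 T, B ^ 2 := by gcongr with t ht; exact hB t ht
    _ = B ^ 2 * T := by simp [mul_comm]

end Frobenius

/-- Bound on the escaped mass: with `V̄_t = P_t V̄_{t-1} P_tᵀ + G_tᵀ G_t` (starting from
`V̄₀ = 0`) where `P_t P_tᵀ ⪯ I`, and `ρ_t ≤ ρ_{t-1} + trace(V̄_{t-1}) - trace(P_t V̄_{t-1} P_tᵀ)`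
(starting from `ρ₀ = 0`), every `V̄_t` is positive semidefinite and
`ρ_T ≤ Σ_t trace(G_tᵀ G_t) - trace(V̄_T)`; in particular `‖G_t‖_F ≤ G` implies `ρ_T ≤ G² T`. -/
theorem escaped_mass_bound (m r T : ℕ)
    (G : ℕ → Matrix (Fin m) (Fin r) ℝ)
    (P : ℕ → Matrix (Fin r) (Fin r) ℝ)
    (hP : ∀ t ∈ Finset.Icc 1 T,
      ((1 : Matrix (Fin r) (Fin r) ℝ) - P t * (P t)ᵀ).PosSemidef)
    (V : ℕ → Matrix (Fin r) (Fin r) ℝ)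
    (hV0 : V 0 = 0)
    (hVt : ∀ t ∈ Finset.Icc 1 T, V t = P t * V (t - 1) * (P t)ᵀ + (G t)ᵀ * G t)
    (ρ : ℕ → ℝ) (hρ0 : ρ 0 = 0)
    (hρ : ∀ t ∈ Finset.Icc 1 T,
      ρ t ≤ ρ (t - 1) + (V (t - 1)).trace - (P t * V (t - 1) * (P t)ᵀ).trace) :
    (∀ t ≤ T, (V t).PosSemidef) ∧
    ρ T ≤ (∑ t ∈ Finset.Icc 1 T, ((G t)ᵀ * G t).trace) - (V T).trace ∧
    (∀ Gbound : ℝ, (∀ t ∈ Finset.Icc 1 T, frobNorm (G t) ≤ Gbound) →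
      ρ T ≤ Gbound ^ 2 * T) := by
  simp only [frobNorm_eq_frobenius_norm, ← conjTranspose_eq_transpose_of_trivial] at hVt hρ ⊢
  exact escaped_mass_bound_general hV0 hVt hρ0 hρ
end
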